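/- There exists a constant C = C(m₁, m₂) ≥ 1 such that for every u > 0, C⁻¹ · φ(u) ≤ sup_{r ∈ [−u, u]} e^{−ρ r} ∫_{−u}^{r} ψ̃(u,s) e^{ρ s} ds ≤ C · φ(u), where φ(u) = u^{m₁+m₂} for 0 < u ≤ 1 and φ(u) = e^{ρ u} for u ≥ 1. -/

import Mathlib

open MeasureTheory ENNReal NNReal

noncomputable section

/-- The kernel `ψ̃(t,s) = sinh t · (cosh t)^{m₂/2} · (cosh t − cosh s)^{(m₁+m₂−2)/2}`
(real powers; the factor `(cosh t)^{m₂/2}` is automatically `1` when `m₂ = 0`). -/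
def psiT (m₁ m₂ : ℕ) (t s : ℝ) : ℝ :=
  Real.sinh t * Real.cosh t ^ ((m₂ : ℝ) / 2) *
    (Real.cosh t - Real.cosh s) ^ (((m₁ : ℝ) + (m₂ : ℝ) - 2) / 2)

/-- `φ(u) = u^{m₁+m₂}` for `0 < u ≤ 1` and `φ(u) = e^{ρu}` for `u ≥ 1`,
with `ρ = (m₁ + 2m₂)/2`. -/
def phiFn (m₁ m₂ : ℕ) (u : ℝ) : ℝ :=
  if u ≤ 1 then u ^ (m₁ + m₂) else Real.exp (((m₁ : ℝ) + 2 * (m₂ : ℝ)) / 2 * u)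


lemma aux_sinh_le (x : ℝ) : Real.sinh x ≤ x * Real.exp x := by
  rw [Real.sinh_eq]
  have h1 := Real.add_one_le_exp (-2 * x)
  have h2 : Real.exp (-x) = Real.exp (-2 * x) * Real.exp x := by
    rw [← Real.exp_add]; ring_nf
  rw [h2]
  nlinarith [Real.exp_pos x]

lemma aux_sinh_le' (x : ℝ) : Real.sinh x ≤ Real.exp x / 2 := by
  rw [Real.sinh_eq]
  linarith [Real.exp_pos (-x)]

lemma aux_cosh_le (x : ℝ) (hx : 0 ≤ x) : Real.cosh x ≤ Real.exp x := by
  rw [Real.cosh_eq]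
  have : Real.exp (-x) ≤ Real.exp x := Real.exp_le_exp.2 (by linarith)
  linarith

lemma aux_cosh_ge (x : ℝ) : Real.exp x / 2 ≤ Real.cosh x := by
  rw [Real.cosh_eq]
  linarith [Real.exp_pos (-x)]

lemma aux_sinh_ge (x : ℝ) (hx : 0 ≤ x) : min 1 x * Real.exp x / 3 ≤ Real.sinh x := by
  rw [Real.sinh_eq]
  have h1 := Real.add_one_le_exp (2 * x)
  have h2 : Real.exp (-x) = Real.exp (-2 * x) * Real.exp x := by
    rw [← Real.exp_add]; ring_nf
  have h3 : Real.exp (-2 * x) * Real.exp (2 * x) = 1 := by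
    rw [← Real.exp_add]; simp
  have h4 : Real.exp (-2 * x) ≤ 1 - 2 / 3 * min 1 x := by
    have hp := Real.exp_pos (-2 * x)
    have h5 : Real.exp (-2 * x) * (2 * x + 1) ≤ 1 := by
      have := mul_le_mul_of_nonneg_left h1 hp.le
      linarith
    rcases le_total 1 x with h | h
    · rw [min_eq_left h]; nlinarith
    · rw [min_eq_right h]
      by_contra! hc
      nlinarith
  rw [h2]
  nlinarith [Real.exp_pos x]

lemma aux_cosh_sub (u s : ℝ) : Real.cosh u - Real.cosh s =
    2 * Real.sinh ((u + s) / 2) * Real.sinh ((u - s) / 2) := by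
  have h1 := Real.cosh_add ((u + s) / 2) ((u - s) / 2)
  have h2 := Real.cosh_sub ((u + s) / 2) ((u - s) / 2)
  have e1 : (u + s) / 2 + (u - s) / 2 = u := by ring
  have e2 : (u + s) / 2 - (u - s) / 2 = s := by ring
  rw [e1] at h1; rw [e2] at h2
  linarith

lemma aux_sub_le (u s : ℝ) (hu : 0 < u) :
    Real.cosh u - Real.cosh s ≤ (min 1 u) ^ 2 * Real.exp u := by
  have h0 := Real.one_le_cosh s
  have h1 := aux_cosh_sub u 0
  simp only [Real.cosh_zero, add_zero, sub_zero] at h1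
  have h2 := aux_sinh_le (u / 2)
  have h3 := aux_sinh_le' (u / 2)
  have h4 : 0 ≤ Real.sinh (u / 2) := Real.sinh_nonneg_iff.2 (by linarith)
  have h5 : Real.sinh (u / 2) ≤ min 1 u / 2 * Real.exp (u / 2) := by
    rcases le_total 1 u with h | h
    · rw [min_eq_left h]; linarith
    · rw [min_eq_right h]; linarith
  have h6 : Real.exp u = Real.exp (u / 2) ^ 2 := by
    rw [← Real.exp_nat_mul]; congr 1; push_cast; ring
  rw [h6]
  have h7 := pow_le_pow_left₀ h4 h5 2
  have h8 : 0 ≤ (min 1 u * Real.exp (u / 2)) ^ 2 := sq_nonneg _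
  nlinarith

lemma aux_sub_ge_nonneg (u s : ℝ) (hu : 0 < u) (hs : 0 ≤ s) (hsu : s ≤ u) :
    min 1 u * min 1 (u - s) * Real.exp u / 18 ≤ Real.cosh u - Real.cosh s := by
  rw [aux_cosh_sub]
  have h1 := aux_sinh_ge ((u + s) / 2) (by linarith)
  have h2 := aux_sinh_ge ((u - s) / 2) (by linarith)
  have h3 : min 1 u / 2 ≤ min 1 ((u + s) / 2) := by
    apply le_min <;> linarith [min_le_left 1 u, min_le_right 1 u]
  have h4 : min 1 (u - s) / 2 ≤ min 1 ((u - s) / 2) := by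
    apply le_min <;> linarith [min_le_left 1 (u - s), min_le_right 1 (u - s)]
  have h5 : 0 ≤ min 1 u := le_min zero_le_one hu.le
  have h6 : 0 ≤ min 1 (u - s) := le_min zero_le_one (by linarith)
  have h7 : Real.exp u = Real.exp ((u + s) / 2) * Real.exp ((u - s) / 2) := by
    rw [← Real.exp_add]; ring_nf
  have h8 : min 1 u / 2 * Real.exp ((u + s) / 2) / 3 ≤ Real.sinh ((u + s) / 2) :=
    le_trans (by gcongr) h1
  have h9 : min 1 (u - s) / 2 * Real.exp ((u - s) / 2) / 3 ≤ Real.sinh ((u - s) / 2) :=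
    le_trans (by gcongr) h2
  have h10 := mul_le_mul h8 h9 (by positivity) (le_trans (by positivity) h8)
  rw [h7]
  nlinarith

lemma aux_sub_ge (u s : ℝ) (hu : 0 < u) (hsu : |s| ≤ u) :
    min 1 u * min 1 (u - |s|) * Real.exp u / 18 ≤ Real.cosh u - Real.cosh s := by
  rw [← Real.cosh_abs s]
  exact aux_sub_ge_nonneg u |s| hu (abs_nonneg s) hsu

/-- truncated inverse square root -/
def hK (δ y : ℝ) : ℝ := Set.indicator (Set.Ioc 0 δ) (fun y => y ^ (-(1/2) : ℝ)) y

lemma hK_nonneg (δ y : ℝ) : 0 ≤ hK δ y := by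
  unfold hK
  apply Set.indicator_nonneg
  intro x hx
  exact Real.rpow_nonneg hx.1.le _

lemma hK_meas (δ : ℝ) : Measurable (hK δ) := by
  unfold hK
  apply Measurable.indicator _ measurableSet_Ioc
  fun_prop

lemma hK_lint (δ : ℝ) (hδ : 0 < δ) :
    ∫⁻ y, ENNReal.ofReal (hK δ y) = ENNReal.ofReal (2 * δ ^ (1/2 : ℝ)) := by
  have hi : IntegrableOn (fun y : ℝ => y ^ (-(1/2) : ℝ)) (Set.Ioc 0 δ) := by
    rw [← intervalIntegrable_iff_integrableOn_Ioc_of_le hδ.le]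
    exact intervalIntegral.intervalIntegrable_rpow' (by norm_num)
  have hi' : Integrable (hK δ) := by
    have := (integrable_indicator_iff (μ := volume) (measurableSet_Ioc (a := (0:ℝ)) (b := δ))).2 hi
    exact this
  rw [← ofReal_integral_eq_lintegral_ofReal hi' (ae_of_all _ (hK_nonneg δ))]
  congr 1
  have : ∫ y, hK δ y = ∫ y in Set.Ioc 0 δ, y ^ (-(1/2) : ℝ) := by
    rw [← integral_indicator measurableSet_Ioc]; rfl
  rw [this, ← intervalIntegral.integral_of_le hδ.le, integral_rpow (Or.inl (by norm_num))]
  norm_num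
  ring

lemma exp_lint (ρ u r : ℝ) (hρ : 1 / 2 ≤ ρ) (hr : r ≤ u) (hu : 0 < u) :
    ∫⁻ s in Set.Icc (-u) r, ENNReal.ofReal (Real.exp (ρ * (s - r))) ≤
      ENNReal.ofReal (2 * min 1 u) := by
  rcases le_total 1 u with h | h
  · rw [min_eq_left h]
    have hi := integrableOn_exp_mul_Iic (a := ρ) (by linarith) r
    have e : ∀ s, Real.exp (ρ * (s - r)) = Real.exp (-ρ * r) * Real.exp (ρ * s) := by
      intro s; rw [← Real.exp_add]; ring_nf
    calc _ ≤ ∫⁻ s in Set.Iic r, ENNReal.ofReal (Real.exp (ρ * (s - r))) :=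
          lintegral_mono_set Set.Icc_subset_Iic_self
      _ = ENNReal.ofReal (∫ s in Set.Iic r, Real.exp (ρ * (s - r))) := by
          rw [ofReal_integral_eq_lintegral_ofReal]
          · simp only [e]; exact hi.const_mul _
          · exact ae_of_all _ (fun s => (Real.exp_pos _).le)
      _ ≤ _ := by
          apply ENNReal.ofReal_le_ofReal
          simp only [e]
          rw [integral_const_mul, integral_exp_mul_Iic (by linarith), ← mul_div_assoc,
            ← Real.exp_add]
          rw [show -ρ * r + ρ * r = 0 by ring, Real.exp_zero, div_le_iff₀ (by linarith)]
          linarith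
  · rw [min_eq_right h]
    calc _ ≤ ∫⁻ s in Set.Icc (-u) r, 1 := by
          apply setLIntegral_mono measurable_const
          intro s hs
          rw [← ENNReal.ofReal_one]
          apply ENNReal.ofReal_le_ofReal
          rw [Real.exp_le_one_iff]
          nlinarith [hs.2]
      _ = ENNReal.ofReal (r - -u) := by simp
      _ ≤ _ := ENNReal.ofReal_le_ofReal (by linarith)

/-- pointwise: `t^a` bound from above -/
lemma t_upper (a u s : ℝ) (ha : -(1/2) ≤ a) (hu : 0 < u) (hs : |s| < u) :
    ((Real.cosh u - Real.cosh s) / ((min 1 u) ^ 2 * Real.exp u)) ^ a ≤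
      (18 : ℝ) ^ (1/2 : ℝ) * (min 1 u) ^ (1/2 : ℝ) *
        (1 + hK (min 1 u) (u - s) + hK (min 1 u) (u + s)) := by
  have hδ : 0 < min 1 u := lt_min one_pos hu
  have hlo := aux_sub_ge u s hu hs.le
  have hhi := aux_sub_le u s hu
  set δ := min 1 u with hδdef
  have hY : 0 < δ ^ 2 * Real.exp u := by positivity
  have hm : 0 < min 1 (u - |s|) := lt_min one_pos (by linarith)
  have hq : 0 < min 1 (u - |s|) / (18 * δ) := by positivity
  have h1 : min 1 (u - |s|) / (18 * δ) ≤
      (Real.cosh u - Real.cosh s) / (δ ^ 2 * Real.exp u) := by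
    rw [div_le_div_iff₀ (by positivity) hY]
    nlinarith
  set t := (Real.cosh u - Real.cosh s) / (δ ^ 2 * Real.exp u) with ht
  have ht0 : 0 < t := lt_of_lt_of_le hq h1
  have ht1 : t ≤ 1 := (div_le_one hY).2 hhi
  have h2 : t ^ a ≤ t ^ (-(1/2) : ℝ) := Real.rpow_le_rpow_of_exponent_ge ht0 ht1 ha
  have h3 : t ^ (-(1/2) : ℝ) ≤ (min 1 (u - |s|) / (18 * δ)) ^ (-(1/2) : ℝ) :=
    Real.rpow_le_rpow_of_nonpos hq h1 (by norm_num)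
  have h4 : (min 1 (u - |s|) / (18 * δ)) ^ (-(1/2) : ℝ) =
      (18 : ℝ) ^ (1/2 : ℝ) * δ ^ (1/2 : ℝ) * (min 1 (u - |s|)) ^ (-(1/2) : ℝ) := by
    rw [Real.div_rpow hm.le (by positivity), Real.rpow_neg (by positivity : 0 ≤ 18 * δ),
      Real.mul_rpow (by norm_num) hδ.le, div_inv_eq_mul]
    ring
  have h5 : (min 1 (u - |s|)) ^ (-(1/2) : ℝ) ≤ 1 + hK δ (u - s) + hK δ (u + s) := by
    have k1 := hK_nonneg δ (u - s)
    have k2 := hK_nonneg δ (u + s)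
    rcases le_or_gt (u - |s|) δ with h | h
    · have hle1 : u - |s| ≤ 1 := h.trans (min_le_left _ _)
      rw [min_eq_right hle1]
      have h6 : hK δ (u - |s|) = (u - |s|) ^ (-(1/2) : ℝ) := by
        unfold hK
        rw [Set.indicator_of_mem]
        exact ⟨by linarith, h⟩
      rw [← h6]
      rcases abs_cases s with ⟨h7, _⟩ | ⟨h7, _⟩
      · rw [h7]; linarith
      · rw [h7, sub_neg_eq_add]; linarith
    · have : 1 ≤ u - |s| := by
        rcases le_total 1 u with h8 | h8
        · rw [hδdef, min_eq_left h8] at h; exact h.le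
        · rw [hδdef, min_eq_right h8] at h; linarith [abs_nonneg s]
      rw [min_eq_left this, Real.one_rpow]
      linarith
  calc t ^ a ≤ _ := h2.trans h3
    _ ≤ _ := by rw [h4]; gcongr

lemma t_lower (a u s : ℝ) (ha : -(1/2) ≤ a) (hu : 0 < u) (hs : u - min 1 u ≤ s)
    (hs' : s ≤ u - min 1 u / 2) :
    (1 / 36 : ℝ) ^ (a + 1) ≤
      ((Real.cosh u - Real.cosh s) / ((min 1 u) ^ 2 * Real.exp u)) ^ a := by
  have hδ : 0 < min 1 u := lt_min one_pos hu
  have hδ1 : min 1 u ≤ 1 := min_le_left _ _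
  have hδu : min 1 u ≤ u := min_le_right _ _
  have hlo := aux_sub_ge_nonneg u s hu (by linarith) (by linarith)
  have hhi := aux_sub_le u s hu
  have hm : min 1 u / 2 ≤ min 1 (u - s) := le_min (by linarith) (by linarith)
  set δ := min 1 u with hδdef
  have hY : 0 < δ ^ 2 * Real.exp u := by positivity
  have h1 : 1 / 36 ≤ (Real.cosh u - Real.cosh s) / (δ ^ 2 * Real.exp u) := by
    rw [le_div_iff₀ hY]
    refine le_trans ?_ hlo
    have : δ * (δ / 2) * Real.exp u ≤ δ * min 1 (u - s) * Real.exp u := by gcongr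
    nlinarith
  set t := (Real.cosh u - Real.cosh s) / (δ ^ 2 * Real.exp u) with ht
  have ht0 : 0 < t := by linarith
  have ht1 : t ≤ 1 := (div_le_one hY).2 hhi
  calc (1 / 36 : ℝ) ^ (a + 1) ≤ t ^ (a + 1) :=
        Real.rpow_le_rpow (by norm_num) h1 (by linarith)
    _ ≤ t ^ a := Real.rpow_le_rpow_of_exponent_ge ht0 ht1 (by linarith)

/-- comparison amplitude -/
def ampB (m₁ m₂ : ℕ) (u : ℝ) : ℝ :=
  min 1 u * Real.exp u * Real.exp u ^ ((m₂ : ℝ) / 2) *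
    ((min 1 u) ^ 2 * Real.exp u) ^ (((m₁ : ℝ) + (m₂ : ℝ) - 2) / 2)

lemma ampB_mul (m₁ m₂ : ℕ) (u : ℝ) (hu : 0 < u) :
    ampB m₁ m₂ u * min 1 u = (min 1 u) ^ (m₁ + m₂) *
      Real.exp (((m₁ : ℝ) + 2 * (m₂ : ℝ)) / 2 * u) := by
  have hδ : 0 < min 1 u := lt_min one_pos hu
  unfold ampB
  set δ := min 1 u
  rw [Real.mul_rpow (by positivity) (Real.exp_pos u).le, ← Real.exp_mul, ← Real.exp_mul,
    ← Real.rpow_natCast δ 2, ← Real.rpow_mul hδ.le, ← Real.rpow_natCast δ (m₁ + m₂)]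
  have e1 : δ ^ ((m₁ + m₂ : ℕ) : ℝ) =
      δ ^ (((2:ℕ) : ℝ) * (((m₁ : ℝ) + (m₂ : ℝ) - 2) / 2)) * δ * δ := by
    rw [← Real.rpow_add_one hδ.ne', ← Real.rpow_add_one hδ.ne']
    congr 1; push_cast; ring
  have e2 : Real.exp (((m₁ : ℝ) + 2 * (m₂ : ℝ)) / 2 * u) = Real.exp u *
      Real.exp (u * ((m₂ : ℝ) / 2)) * Real.exp (u * (((m₁ : ℝ) + (m₂ : ℝ) - 2) / 2)) := by
    rw [← Real.exp_add, ← Real.exp_add]; congr 1; ring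
  rw [e1, e2]; ring

lemma phi_le (m₁ m₂ : ℕ) (u : ℝ) (hu : 0 < u) :
    phiFn m₁ m₂ u ≤ ampB m₁ m₂ u * min 1 u := by
  rw [ampB_mul m₁ m₂ u hu]
  unfold phiFn
  split_ifs with h
  · rw [min_eq_right h]
    exact le_mul_of_one_le_right (by positivity) (Real.one_le_exp (by positivity))
  · rw [min_eq_left (not_le.1 h).le]; simp

lemma le_phi (m₁ m₂ : ℕ) (u : ℝ) (hu : 0 < u) :
    ampB m₁ m₂ u * min 1 u ≤
      Real.exp (((m₁ : ℝ) + 2 * (m₂ : ℝ)) / 2) * phiFn m₁ m₂ u := by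
  rw [ampB_mul m₁ m₂ u hu]
  unfold phiFn
  split_ifs with h
  · rw [min_eq_right h, mul_comm]
    gcongr
    exact mul_le_of_le_one_right (by positivity) h
  · rw [min_eq_left (not_le.1 h).le, one_pow, one_mul]
    exact le_mul_of_one_le_left (by positivity) (Real.one_le_exp (by positivity))

lemma psi_split (m₁ m₂ : ℕ) (u s : ℝ) (hu : 0 < u) (hs : |s| ≤ u) :
    psiT m₁ m₂ u s = Real.sinh u * Real.cosh u ^ ((m₂ : ℝ) / 2) *
      ((min 1 u) ^ 2 * Real.exp u) ^ (((m₁ : ℝ) + (m₂ : ℝ) - 2) / 2) *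
      ((Real.cosh u - Real.cosh s) / ((min 1 u) ^ 2 * Real.exp u)) ^
        (((m₁ : ℝ) + (m₂ : ℝ) - 2) / 2) := by
  have hδ : 0 < min 1 u := lt_min one_pos hu
  have hY : 0 < (min 1 u) ^ 2 * Real.exp u := by positivity
  have hX : 0 ≤ Real.cosh u - Real.cosh s := by
    rw [sub_nonneg, Real.cosh_le_cosh, abs_of_pos hu]; exact hs
  unfold psiT
  rw [mul_assoc (_ * _), ← Real.mul_rpow hY.le (by positivity), mul_div_cancel₀ _ hY.ne']

lemma psi_upper (m₁ m₂ : ℕ) (hm₁ : 1 ≤ m₁) (u s : ℝ) (hu : 0 < u) (hs : |s| < u) :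
    psiT m₁ m₂ u s ≤ ampB m₁ m₂ u * ((18 : ℝ) ^ (1/2 : ℝ) * (min 1 u) ^ (1/2 : ℝ) *
        (1 + hK (min 1 u) (u - s) + hK (min 1 u) (u + s))) := by
  rw [psi_split m₁ m₂ u s hu hs.le]
  have hδ : 0 < min 1 u := lt_min one_pos hu
  have hm : (1 : ℝ) ≤ m₁ := by exact_mod_cast hm₁
  have hm2 : (0 : ℝ) ≤ m₂ := by positivity
  have h1 := t_upper (((m₁ : ℝ) + (m₂ : ℝ) - 2) / 2) u s (by linarith) hu hs
  have hX : 0 ≤ Real.cosh u - Real.cosh s := by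
    rw [sub_nonneg, Real.cosh_le_cosh, abs_of_pos hu]; exact hs.le
  have h2 : Real.sinh u ≤ min 1 u * Real.exp u := by
    rcases le_total 1 u with h | h
    · rw [min_eq_left h]; linarith [aux_sinh_le' u, Real.exp_pos u]
    · rw [min_eq_right h]; exact aux_sinh_le u
  have h3 : Real.cosh u ^ ((m₂ : ℝ) / 2) ≤ Real.exp u ^ ((m₂ : ℝ) / 2) :=
    Real.rpow_le_rpow (Real.cosh_pos u).le (aux_cosh_le u hu.le) (by positivity)
  have hc := Real.cosh_pos u
  unfold ampB
  gcongr

lemma psi_lower (m₁ m₂ : ℕ) (hm₁ : 1 ≤ m₁) (u s : ℝ) (hu : 0 < u) (hs : u - min 1 u ≤ s)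
    (hs' : s ≤ u - min 1 u / 2) :
    ampB m₁ m₂ u * (1 / 3 * (1 / 2) ^ ((m₂ : ℝ) / 2) *
      (1 / 36 : ℝ) ^ (((m₁ : ℝ) + (m₂ : ℝ) - 2) / 2 + 1)) ≤ psiT m₁ m₂ u s := by
  have hδ : 0 < min 1 u := lt_min one_pos hu
  have hδu : min 1 u ≤ u := min_le_right _ _
  rw [psi_split m₁ m₂ u s hu (by rw [abs_of_nonneg] <;> linarith)]
  have hm : (1 : ℝ) ≤ m₁ := by exact_mod_cast hm₁
  have hm2 : (0 : ℝ) ≤ m₂ := by positivity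
  have h1 := t_lower (((m₁ : ℝ) + (m₂ : ℝ) - 2) / 2) u s (by linarith) hu hs hs'
  have h2 := aux_sinh_ge u hu.le
  have h3 : (Real.exp u / 2) ^ ((m₂ : ℝ) / 2) ≤ Real.cosh u ^ ((m₂ : ℝ) / 2) :=
    Real.rpow_le_rpow (by positivity) (aux_cosh_ge u) (by positivity)
  have h4 : (Real.exp u / 2) ^ ((m₂ : ℝ) / 2) =
      Real.exp u ^ ((m₂ : ℝ) / 2) * (1 / 2) ^ ((m₂ : ℝ) / 2) := by
    rw [← Real.mul_rpow (Real.exp_pos u).le (by norm_num)]; congr 1; ring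
  have hc := Real.cosh_pos u
  have hsn : 0 ≤ Real.sinh u := Real.sinh_nonneg_iff.2 hu.le
  calc _ = (min 1 u * Real.exp u / 3) * (Real.exp u / 2) ^ ((m₂ : ℝ) / 2) *
      ((min 1 u) ^ 2 * Real.exp u) ^ (((m₁ : ℝ) + (m₂ : ℝ) - 2) / 2) *
      (1 / 36 : ℝ) ^ (((m₁ : ℝ) + (m₂ : ℝ) - 2) / 2 + 1) := by
        rw [h4]; unfold ampB; ring
    _ ≤ _ := by gcongr

lemma ampB_nonneg (m₁ m₂ : ℕ) (u : ℝ) (hu : 0 < u) : 0 ≤ ampB m₁ m₂ u := by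
  have hδ : 0 < min 1 u := lt_min one_pos hu
  unfold ampB; positivity

lemma upper_main (m₁ m₂ : ℕ) (hm₁ : 1 ≤ m₁) (u r : ℝ) (hu : 0 < u)
    (hr : r ∈ Set.Icc (-u) u) :
    ENNReal.ofReal (Real.exp (-(((m₁ : ℝ) + 2 * (m₂ : ℝ)) / 2) * r)) *
            ∫⁻ s in Set.Icc (-u) r,
              ENNReal.ofReal
                (psiT m₁ m₂ u s * Real.exp (((m₁ : ℝ) + 2 * (m₂ : ℝ)) / 2 * s)) ≤
      ENNReal.ofReal ((6 * (18 : ℝ) ^ (1/2 : ℝ)) * (ampB m₁ m₂ u * min 1 u)) := by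
  have hδ : 0 < min 1 u := lt_min one_pos hu
  have hδ1 : min 1 u ≤ 1 := min_le_left _ _
  have hm : (1 : ℝ) ≤ m₁ := by exact_mod_cast hm₁
  have hm2 : (0 : ℝ) ≤ m₂ := by positivity
  have hB := ampB_nonneg m₁ m₂ u hu
  set ρ := ((m₁ : ℝ) + 2 * (m₂ : ℝ)) / 2 with hρd
  have hρ : 1 / 2 ≤ ρ := by rw [hρd]; linarith
  have hE := exp_lint ρ u r hρ hr.2 hu
  have hH := hK_lint (min 1 u) hδ
  set δ := min 1 u with hδd
  set K := ampB m₁ m₂ u * ((18 : ℝ) ^ (1/2 : ℝ) * δ ^ (1/2 : ℝ)) with hKd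
  have hK0 : 0 ≤ K := by positivity
  have hkm := hK_meas δ
  have hpt : ∀ s ∈ Set.Ioo (-u) r,
      ENNReal.ofReal (Real.exp (-ρ * r)) * ENNReal.ofReal (psiT m₁ m₂ u s * Real.exp (ρ * s)) ≤
      ENNReal.ofReal K * (ENNReal.ofReal (Real.exp (ρ * (s - r))) +
        (ENNReal.ofReal (hK δ (u - s)) + ENNReal.ofReal (hK δ (u + s)))) := by
    intro s hs
    have h1 := psi_upper m₁ m₂ hm₁ u s hu (abs_lt.2 ⟨hs.1, hs.2.trans_le hr.2⟩)
    have k1 := hK_nonneg δ (u - s)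
    have k2 := hK_nonneg δ (u + s)
    have e0 := Real.exp_pos (ρ * (s - r))
    have e1 : Real.exp (ρ * (s - r)) ≤ 1 := by
      rw [Real.exp_le_one_iff]; nlinarith [hs.2]
    rw [← ENNReal.ofReal_mul (Real.exp_pos _).le, ← ENNReal.ofReal_add k1 k2,
      ← ENNReal.ofReal_add e0.le (by positivity), ← ENNReal.ofReal_mul hK0]
    apply ENNReal.ofReal_le_ofReal
    have e2 : Real.exp (-ρ * r) * (psiT m₁ m₂ u s * Real.exp (ρ * s)) =
        psiT m₁ m₂ u s * Real.exp (ρ * (s - r)) := by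
      rw [show ρ * (s - r) = -ρ * r + ρ * s by ring, Real.exp_add]; ring
    rw [e2]
    calc psiT m₁ m₂ u s * Real.exp (ρ * (s - r)) ≤
        K * (1 + hK δ (u - s) + hK δ (u + s)) * Real.exp (ρ * (s - r)) := by
          gcongr; refine h1.trans (le_of_eq ?_); rw [hKd]; ring
      _ = K * ((1 + hK δ (u - s) + hK δ (u + s)) * Real.exp (ρ * (s - r))) := by ring
      _ ≤ _ := by gcongr; nlinarith
  rw [← lintegral_const_mul' _ _ ENNReal.ofReal_ne_top, ← setLIntegral_congr Ioo_ae_eq_Icc]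
  have hs2 : δ ^ (1/2 : ℝ) * δ ^ (1/2 : ℝ) = δ := by
    rw [← Real.rpow_add hδ]; norm_num
  have hs1 : δ ^ (1/2 : ℝ) ≤ 1 := Real.rpow_le_one hδ.le hδ1 (by norm_num)
  have hs0 : 0 < δ ^ (1/2 : ℝ) := by positivity
  calc _ ≤ ∫⁻ s in Set.Ioo (-u) r, ENNReal.ofReal K * (ENNReal.ofReal (Real.exp (ρ * (s - r))) +
        (ENNReal.ofReal (hK δ (u - s)) + ENNReal.ofReal (hK δ (u + s)))) :=
        setLIntegral_mono (by fun_prop) hpt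
    _ ≤ ENNReal.ofReal K * (ENNReal.ofReal (2 * δ) + (ENNReal.ofReal (2 * δ ^ (1/2 : ℝ)) +
          ENNReal.ofReal (2 * δ ^ (1/2 : ℝ)))) := by
        rw [lintegral_const_mul' _ _ ENNReal.ofReal_ne_top]
        gcongr
        rw [lintegral_add_left (by fun_prop), lintegral_add_left (by fun_prop)]
        gcongr
        · exact (lintegral_mono_set Set.Ioo_subset_Icc_self).trans hE
        · refine (setLIntegral_le_lintegral _ _).trans (le_of_eq ?_)
          rw [lintegral_sub_left_eq_self (fun y => ENNReal.ofReal (hK δ y)) u, hH]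
        · refine (setLIntegral_le_lintegral _ _).trans (le_of_eq ?_)
          rw [lintegral_add_left_eq_self (fun y => ENNReal.ofReal (hK δ y)) u, hH]
    _ ≤ _ := by
        rw [← ENNReal.ofReal_add (by positivity) (by positivity),
          ← ENNReal.ofReal_add (by positivity) (by positivity), ← ENNReal.ofReal_mul hK0]
        apply ENNReal.ofReal_le_ofReal
        have : δ ^ (1/2 : ℝ) * (2 * δ + (2 * δ ^ (1/2 : ℝ) + 2 * δ ^ (1/2 : ℝ))) ≤ 6 * δ := by
          nlinarith
        calc _ = ampB m₁ m₂ u * (18 : ℝ) ^ (1/2 : ℝ) *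
            (δ ^ (1/2 : ℝ) * (2 * δ + (2 * δ ^ (1/2 : ℝ) + 2 * δ ^ (1/2 : ℝ)))) := by
              rw [hKd]; ring
          _ ≤ ampB m₁ m₂ u * (18 : ℝ) ^ (1/2 : ℝ) * (6 * δ) := by gcongr
          _ = _ := by ring

lemma lower_main (m₁ m₂ : ℕ) (hm₁ : 1 ≤ m₁) (u : ℝ) (hu : 0 < u) :
    ENNReal.ofReal ((1 / 3 * (1 / 2) ^ ((m₂ : ℝ) / 2) *
      (1 / 36 : ℝ) ^ (((m₁ : ℝ) + (m₂ : ℝ) - 2) / 2 + 1) *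
        Real.exp (-(((m₁ : ℝ) + 2 * (m₂ : ℝ)) / 2)) / 2) * (ampB m₁ m₂ u * min 1 u)) ≤
    ENNReal.ofReal (Real.exp (-(((m₁ : ℝ) + 2 * (m₂ : ℝ)) / 2) * (u - min 1 u / 2))) *
            ∫⁻ s in Set.Icc (-u) (u - min 1 u / 2),
              ENNReal.ofReal
                (psiT m₁ m₂ u s * Real.exp (((m₁ : ℝ) + 2 * (m₂ : ℝ)) / 2 * s)) := by
  have hδ : 0 < min 1 u := lt_min one_pos hu
  have hδ1 : min 1 u ≤ 1 := min_le_left _ _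
  have hδu : min 1 u ≤ u := min_le_right _ _
  have hB := ampB_nonneg m₁ m₂ u hu
  have hpl := fun s => psi_lower m₁ m₂ hm₁ u s hu
  set ρ := ((m₁ : ℝ) + 2 * (m₂ : ℝ)) / 2 with hρd
  have hρ : 0 ≤ ρ := by positivity
  set δ := min 1 u with hδd
  set k := (1 / 3 * (1 / 2) ^ ((m₂ : ℝ) / 2) *
      (1 / 36 : ℝ) ^ (((m₁ : ℝ) + (m₂ : ℝ) - 2) / 2 + 1)) with hk
  have hk0 : 0 ≤ k := by positivity
  rw [← lintegral_const_mul' _ _ ENNReal.ofReal_ne_top]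
  calc _ = ∫⁻ s in Set.Icc (u - δ) (u - δ / 2),
          ENNReal.ofReal (ampB m₁ m₂ u * k * Real.exp (-ρ)) := by
        rw [setLIntegral_const, Real.volume_Icc, ← ENNReal.ofReal_mul (by positivity)]
        congr 1; ring
    _ ≤ ∫⁻ s in Set.Icc (u - δ) (u - δ / 2), ENNReal.ofReal (Real.exp (-ρ * (u - δ / 2))) *
          ENNReal.ofReal (psiT m₁ m₂ u s * Real.exp (ρ * s)) := by
        apply setLIntegral_mono' measurableSet_Icc
        intro s hs
        rw [← ENNReal.ofReal_mul (Real.exp_pos _).le]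
        apply ENNReal.ofReal_le_ofReal
        have h1 := hpl s hs.1 hs.2
        have e2 : Real.exp (-ρ * (u - δ / 2)) * (psiT m₁ m₂ u s * Real.exp (ρ * s)) =
            psiT m₁ m₂ u s * Real.exp (ρ * (s - (u - δ / 2))) := by
          rw [show ρ * (s - (u - δ / 2)) = -ρ * (u - δ / 2) + ρ * s by ring, Real.exp_add]; ring
        rw [e2]
        have h0 : 0 ≤ ampB m₁ m₂ u * k := by positivity
        apply mul_le_mul h1 _ (Real.exp_pos _).le (h0.trans h1)
        apply Real.exp_le_exp.2
        nlinarith [hs.1]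
    _ ≤ _ := lintegral_mono_set (Set.Icc_subset_Icc_left (by linarith))

/-- For every `u > 0`,
`φ(u) ≈ sup_{r ∈ [−u,u]} e^{−ρ r} ∫_{−u}^r ψ̃(u,s) e^{ρ s} ds`, where `ρ = (m₁+2m₂)/2`. -/
theorem phi_comparison (m₁ m₂ : ℕ) (hm₁ : 1 ≤ m₁) :
    ∃ C : ℝ≥0, 1 ≤ C ∧ ∀ u : ℝ, 0 < u →
      ((C : ℝ≥0∞)⁻¹ * ENNReal.ofReal (phiFn m₁ m₂ u) ≤
        ⨆ r ∈ Set.Icc (-u) u,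
          ENNReal.ofReal (Real.exp (-(((m₁ : ℝ) + 2 * (m₂ : ℝ)) / 2) * r)) *
            ∫⁻ s in Set.Icc (-u) r,
              ENNReal.ofReal
                (psiT m₁ m₂ u s * Real.exp (((m₁ : ℝ) + 2 * (m₂ : ℝ)) / 2 * s))) ∧
      ((⨆ r ∈ Set.Icc (-u) u,
          ENNReal.ofReal (Real.exp (-(((m₁ : ℝ) + 2 * (m₂ : ℝ)) / 2) * r)) *
            ∫⁻ s in Set.Icc (-u) r,
              ENNReal.ofReal
                (psiT m₁ m₂ u s * Real.exp (((m₁ : ℝ) + 2 * (m₂ : ℝ)) / 2 * s))) ≤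
        (C : ℝ≥0∞) * ENNReal.ofReal (phiFn m₁ m₂ u)) := by
  set ρ := ((m₁ : ℝ) + 2 * (m₂ : ℝ)) / 2 with hρ
  set k : ℝ := (1 / 3 * (1 / 2) ^ ((m₂ : ℝ) / 2) *
      (1 / 36 : ℝ) ^ (((m₁ : ℝ) + (m₂ : ℝ) - 2) / 2 + 1) * Real.exp (-ρ) / 2) with hk
  have hk0 : 0 < k := by positivity
  set A : ℝ := 6 * (18 : ℝ) ^ (1/2 : ℝ) with hA
  have hA0 : 0 < A := by positivity
  set c : ℝ := max 1 (max k⁻¹ (A * Real.exp ρ)) with hc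
  have hc1 : 1 ≤ c := le_max_left _ _
  have hc2 : k⁻¹ ≤ c := (le_max_left _ _).trans (le_max_right _ _)
  have hc3 : A * Real.exp ρ ≤ c := (le_max_right _ _).trans (le_max_right _ _)
  have hc0 : 0 < c := by linarith
  refine ⟨c.toNNReal, by rwa [Real.one_le_toNNReal], ?_⟩
  intro u hu
  have hδ : 0 < min 1 u := lt_min one_pos hu
  have hδu : min 1 u ≤ u := min_le_right _ _
  have hφ : 0 ≤ phiFn m₁ m₂ u := by unfold phiFn; split_ifs <;> positivity
  have hcc : ((c.toNNReal : ℝ≥0) : ℝ≥0∞) = ENNReal.ofReal c := rfl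
  rw [hcc]
  constructor
  · refine le_trans ?_ (le_iSup₂ (u - min 1 u / 2) ⟨by linarith, by linarith⟩)
    refine le_trans ?_ (lower_main m₁ m₂ hm₁ u hu)
    rw [← ENNReal.ofReal_inv_of_pos hc0, ← ENNReal.ofReal_mul (by positivity)]
    apply ENNReal.ofReal_le_ofReal
    have h1 := phi_le m₁ m₂ u hu
    have h2 : c⁻¹ ≤ k := inv_le_of_inv_le₀ hk0 hc2
    exact mul_le_mul h2 h1 hφ hk0.le
  · refine iSup₂_le fun r hr => ?_
    refine (upper_main m₁ m₂ hm₁ u r hu hr).trans ?_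
    rw [← ENNReal.ofReal_mul hc0.le]
    apply ENNReal.ofReal_le_ofReal
    have h1 := le_phi m₁ m₂ u hu
    calc _ ≤ A * (Real.exp ρ * phiFn m₁ m₂ u) := by gcongr
      _ = A * Real.exp ρ * phiFn m₁ m₂ u := by ring
      _ ≤ _ := by gcongr

end
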